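/- arXiv:math/0202214 — 2 statements merged into one kernel-verified Lean document; each statement's English description precedes it below -/
import Mathlib

section
/- There exists a non-singular n(n−1)/2 × n(n−1)/2 matrix J over ℤ[t^{±1}, q^{±1}] such that for every n-braid β, the Lawrence–Krammer matrix M = K(β) satisfies M J M* = J, where M* is the transpose of M with t, q replaced by t^{−1}, q^{−1}. (The Lawrence–Krammer representation is unitary.) -/
open Matrix

noncomputable section

/-- Braid relations among the Artin generators `σ_1, …, σ_{n-1}`
(indexed here by `Fin (n-1)`, with `i : Fin (n-1)` standing for `σ_{i+1}`). -/
def braidRels (n : ℕ) : Set (FreeGroup (Fin (n - 1))) :=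
  {r | (∃ i j : Fin (n - 1), (i : ℕ) + 1 = (j : ℕ) ∧
          r = .of i * .of j * .of i * (.of j * .of i * .of j)⁻¹) ∨
       (∃ i j : Fin (n - 1), (i : ℕ) + 2 ≤ (j : ℕ) ∧
          r = .of i * .of j * (.of j * .of i)⁻¹)}

/-- The braid group `B_n` as a presented group. -/
abbrev Braid (n : ℕ) := PresentedGroup (braidRels n)

/-- The Artin generator `σ_{i+1}` of `B_n`. -/
def σg {n : ℕ} (i : Fin (n - 1)) : Braid n := PresentedGroup.of i

/-- Index set `{(i,j) : 1 ≤ i < j ≤ n}` for the Lawrence–Krammer basis `X_{i,j}`. -/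
abbrev BP (n : ℕ) := {p : Fin (n + 1) × Fin (n + 1) // 0 < (p.1 : ℕ) ∧ (p.1 : ℕ) < (p.2 : ℕ)}

/-- The standard basis row vector `X_{a,b}`. -/
def ee {R : Type*} [CommRing R] (n a b : ℕ) : BP n → R :=
  fun c => if (c.val.1 : ℕ) = a ∧ (c.val.2 : ℕ) = b then 1 else 0

/-- The Lawrence–Krammer matrix of the Artin generator `σ_m` (1-based `m`),
with parameters `t`, `q`; row `(i,j)` is the expansion of `X_{i,j}·σ_m` in the basis. -/
def LKgen {R : Type*} [CommRing R] (t q : R) (n m : ℕ) : Matrix (BP n) (BP n) R :=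
  fun r c =>
    let i := (r.val.1 : ℕ); let j := (r.val.2 : ℕ)
    if m = i ∧ j = i + 1 then -(t * q ^ 2) * ee n i j c
    else if m = i then
      q * ee n (i + 1) j c + (1 - q) * ee n i j c + t * q * (1 - q) * ee n i (i + 1) c
    else if m = j then
      q * ee n i (j + 1) c + (1 - q) * ee n i j c - q * (1 - q) * ee n j (j + 1) c
    else if m + 1 = i then ee n (i - 1) j c
    else if m + 1 = j then ee n i (j - 1) c
    else ee n i j c

/-- The field `ℚ(t,q)` of rational functions in two variables. -/
abbrev F2 := FractionRing (MvPolynomial (Fin 2) ℚ)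

/-- The variable `t` in `ℚ(t,q)`. -/
def tt : F2 := algebraMap (MvPolynomial (Fin 2) ℚ) F2 (MvPolynomial.X 0)

/-- The variable `q` in `ℚ(t,q)`. -/
def qq : F2 := algebraMap (MvPolynomial (Fin 2) ℚ) F2 (MvPolynomial.X 1)

/-!
Pairing with a fixed basis vector turns the generator `σ_m` into an operator on functions of
`(i, j)`. The entries of `J` are chosen so that the adjoint of `σ_m`, computed with inverted
parameters, is `σ_m⁻¹`; this compares one application of `σ_m` with one of `σ_m⁻¹`, and is checked
for each position of `{i, j}` relative to `{m, m + 1}`. Matrices preserving `J` form a group, so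
invariance passes from the generators to all braids. At `q = 1` the matrix `J` becomes
`(t - 1) (1 + t)` times the identity, so its determinant does not vanish identically.
-/

/-- The entry in row `X_{i,j}` and column `X_{k,l}` of the sesquilinear form preserved by the
Lawrence–Krammer representation. It depends only on the relative order of the endpoints of
`[i, j]` and `[k, l]`, and is meant for `i < j` and `k < l`. -/
def lkForm {R : Type*} [CommRing R] (t q : R) (i j k l : ℕ) : R :=
  if i = k ∧ j = l then (q * t - 1) * (1 + q ^ 2 * t)
  else if (i = k ∧ j < l) ∨ (i < k ∧ j = l) then q - 1
  else if (i = k ∧ l < j) ∨ (k < i ∧ j = l) then q ^ 2 * t ^ 2 * (q - 1)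
  else if j = k then -(q ^ 2 * t * (q - 1))
  else if i = l then -(t * (q - 1))
  else if i < k ∧ k < j ∧ j < l then -((q - 1) ^ 2 * (1 + q * t))
  else if k < i ∧ i < l ∧ l < j then t * (q - 1) ^ 2 * (1 + q * t)
  else 0

/-- The Gram matrix of `lkForm` in the basis `X_{i,j}`: the matrix `J` of the theorem. -/
def lkGram {R : Type*} [CommRing R] (t q : R) (n : ℕ) : Matrix (BP n) (BP n) R :=
  fun r c => lkForm t q r.val.1 r.val.2 c.val.1 c.val.2

/-- The pullback along `σ_m` of the linear form `X_{a,b} ↦ f a b`, evaluated at `X_{i,j}`, that is,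
the value of that linear form on `X_{i,j} σ_m`. -/
def lkPullback {R : Type*} [CommRing R] (t q : R) (m : ℕ) (f : ℕ → ℕ → R) (i j : ℕ) : R :=
  if i = m ∧ j = m + 1 then -(t * q ^ 2) * f m (m + 1)
  else if i = m then q * f (m + 1) j + (1 - q) * f m j + t * q * (1 - q) * f m (m + 1)
  else if j = m then q * f i (m + 1) + (1 - q) * f i m - q * (1 - q) * f m (m + 1)
  else if i = m + 1 then f m j
  else if j = m + 1 then f i m
  else f i j

/-- The pullback along `σ_m⁻¹` of the linear form `X_{a,b} ↦ f a b`, evaluated at `X_{i,j}`. Its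
formula is that of `lkPullback` with `t`, `q` inverted and the order of the strands reversed. -/
def lkPullbackInv {R : Type*} [CommRing R] (t q : Rˣ) (m : ℕ) (f : ℕ → ℕ → R) (i j : ℕ) : R :=
  if i = m ∧ j = m + 1 then -(↑t⁻¹ * ↑q⁻¹ ^ 2) * f m (m + 1)
  else if i = m then f (m + 1) j
  else if j = m then f i (m + 1)
  else if i = m + 1 then
    ↑q⁻¹ * f m j + (1 - ↑q⁻¹) * f (m + 1) j - ↑q⁻¹ * (1 - ↑q⁻¹) * f m (m + 1)
  else if j = m + 1 then
    ↑q⁻¹ * f i m + (1 - ↑q⁻¹) * f i (m + 1) + ↑t⁻¹ * ↑q⁻¹ * (1 - ↑q⁻¹) * f m (m + 1)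
  else f i j

section Adjunction

variable {R : Type*} [CommRing R] (t q : Rˣ) {m i j k l : ℕ}

theorem lkPullback_lkPullbackInv (f : ℕ → ℕ → R) (hij : i < j) :
    lkPullback (t : R) q m (lkPullbackInv t q m f) i j = f i j := by
  have ht := t.mul_inv
  have hq := q.mul_inv
  simp only [lkPullback, lkPullbackInv]
  grind

theorem lkPullback_lkForm_adjacent (hkl : k < l) :
    lkPullback (↑t⁻¹ : R) ↑q⁻¹ m (lkForm (t : R) q m (m + 1)) k l =
      -(↑t⁻¹ * ↑q⁻¹ ^ 2) * lkForm (t : R) q m (m + 1) k l := by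
  have ht := t.mul_inv
  have hq := q.mul_inv
  simp only [lkPullback, lkForm]
  grind (splits := 20)

theorem lkPullback_lkForm_left (hj : m + 1 < j) (hkl : k < l) :
    lkPullback (↑t⁻¹ : R) ↑q⁻¹ m (lkForm (t : R) q m j) k l =
      lkForm (t : R) q (m + 1) j k l := by
  have ht := t.mul_inv
  have hq := q.mul_inv
  simp only [lkPullback, lkForm]
  grind (splits := 20)

theorem lkPullback_lkForm_right (hi : i < m) (hkl : k < l) :
    lkPullback (↑t⁻¹ : R) ↑q⁻¹ m (lkForm (t : R) q i m) k l =
      lkForm (t : R) q i (m + 1) k l := by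
  have ht := t.mul_inv
  have hq := q.mul_inv
  simp only [lkPullback, lkForm]
  grind (splits := 20)

theorem lkPullback_lkForm_succ_left (hj : m + 1 < j) (hkl : k < l) :
    lkPullback (↑t⁻¹ : R) ↑q⁻¹ m (lkForm (t : R) q (m + 1) j) k l =
      ↑q⁻¹ * lkForm (t : R) q m j k l + (1 - ↑q⁻¹) * lkForm (t : R) q (m + 1) j k l
        - ↑q⁻¹ * (1 - ↑q⁻¹) * lkForm (t : R) q m (m + 1) k l := by
  have ht := t.mul_inv
  have hq := q.mul_inv
  unfold lkPullback
  split_ifs with h_both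
  · obtain ⟨rfl, rfl⟩ := h_both
    simp (disch := omega) only [lkForm, if_neg]
    grind
  all_goals
    rcases lt_trichotomy j l with hjl | rfl | hlj <;> subst_vars <;> simp only [lkForm] <;>
      grind (splits := 20)

theorem lkPullback_lkForm_succ_right (hi : i < m) (hkl : k < l) :
    lkPullback (↑t⁻¹ : R) ↑q⁻¹ m (lkForm (t : R) q i (m + 1)) k l =
      ↑q⁻¹ * lkForm (t : R) q i m k l + (1 - ↑q⁻¹) * lkForm (t : R) q i (m + 1) k l
        + ↑t⁻¹ * ↑q⁻¹ * (1 - ↑q⁻¹) * lkForm (t : R) q m (m + 1) k l := by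
  have ht := t.mul_inv
  have hq := q.mul_inv
  unfold lkPullback
  split_ifs <;> rcases lt_trichotomy i k with hik | rfl | hki <;> subst_vars <;>
    simp only [lkForm] <;> grind (splits := 20)

theorem lkForm_succ_left_of_disjoint (t q : R) (hi : i < m ∨ m + 1 < i) (hj : j < m ∨ m + 1 < j) :
    lkForm t q i j (m + 1) l = lkForm t q i j m l := by
  simp only [lkForm]
  grind (splits := 20)

theorem lkForm_succ_right_of_disjoint (t q : R) (hi : i < m ∨ m + 1 < i)
    (hj : j < m ∨ m + 1 < j) :
    lkForm t q i j k (m + 1) = lkForm t q i j k m := by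
  simp only [lkForm]
  grind (splits := 20)

theorem lkForm_adjacent_of_disjoint (t q : R) (hi : i < m ∨ m + 1 < i)
    (hj : j < m ∨ m + 1 < j) : lkForm t q i j m (m + 1) = 0 := by
  simp only [lkForm]
  grind

theorem lkPullback_lkForm_of_disjoint (hi : i < m ∨ m + 1 < i) (hj : j < m ∨ m + 1 < j) :
    lkPullback (↑t⁻¹ : R) ↑q⁻¹ m (lkForm (t : R) q i j) k l = lkForm (t : R) q i j k l := by
  have h_left := lkForm_succ_left_of_disjoint (t : R) q (l := l) hi hj
  have h_right := lkForm_succ_right_of_disjoint (t : R) q (k := k) hi hj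
  have h_adjacent := lkForm_adjacent_of_disjoint (t : R) q hi hj
  unfold lkPullback
  grind

theorem lkPullback_lkForm_eq_lkPullbackInv (hij : i < j) (hkl : k < l) :
    lkPullback (↑t⁻¹ : R) ↑q⁻¹ m (lkForm (t : R) q i j) k l =
      lkPullbackInv t q m (fun a b => lkForm (t : R) q a b k l) i j := by
  unfold lkPullbackInv
  split_ifs with h_both h_left h_right h_succ_left h_succ_right
  · obtain ⟨rfl, rfl⟩ := h_both
    exact lkPullback_lkForm_adjacent t q hkl
  · subst h_left
    exact lkPullback_lkForm_left t q (by omega) hkl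
  · subst h_right
    exact lkPullback_lkForm_right t q hij hkl
  · subst h_succ_left
    exact lkPullback_lkForm_succ_left t q hij hkl
  · subst h_succ_right
    exact lkPullback_lkForm_succ_right t q (by omega) hkl
  · exact lkPullback_lkForm_of_disjoint t q (by omega) (by omega)

end Adjunction

section Generator

variable {R : Type*} [CommRing R] {n m : ℕ}

theorem sum_ee_mul {a b : ℕ} (ha : 0 < a) (hab : a < b) (hb : b ≤ n) (f : ℕ → ℕ → R) :
    ∑ c : BP n, ee n a b c * f c.val.1 c.val.2 = f a b := by
  let p : BP n := ⟨(⟨a, by omega⟩, ⟨b, by omega⟩), ha, hab⟩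
  have ee_eq_single : ee (R := R) n a b = Pi.single p 1 := by
    ext c
    simp [ee, p, Pi.single_apply, Subtype.ext_iff, Prod.ext_iff, Fin.ext_iff]
  rw [ee_eq_single]
  exact single_one_dotProduct p fun c : BP n => f c.val.1 c.val.2

theorem LKgen_mulVec (t q : R) (hm : 0 < m) (hmn : m < n) (f : ℕ → ℕ → R) (r : BP n) :
    (LKgen t q n m *ᵥ fun c => f c.val.1 c.val.2) r = lkPullback t q m f r.val.1 r.val.2 := by
  obtain ⟨⟨⟨i, hi⟩, ⟨j, hj⟩⟩, hi0, hij⟩ := r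
  dsimp only at hi0 hij
  simp only [mulVec, dotProduct, LKgen]
  split_ifs <;>
    simp (disch := omega) only [add_mul, sub_mul, mul_assoc, neg_mul, one_mul,
      Finset.sum_add_distrib, Finset.sum_sub_distrib, Finset.sum_neg_distrib, ← Finset.mul_sum,
      sum_ee_mul] <;>
    grind [lkPullback]

theorem map_LKgen {S : Type*} [CommRing S] (φ : R →+* S) (t q : R) :
    (LKgen t q n m).map φ = LKgen (φ t) (φ q) n m := by
  have map_ee (a b : ℕ) (c : BP n) : φ (ee n a b c) = ee n a b c := by
    simp only [ee, apply_ite φ, map_one, map_zero]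
  ext r c
  simp only [LKgen, map_apply]
  split_ifs <;> simp [map_ee]

theorem lkGram_mul_transpose_LKgen (t q : Rˣ) (hm : 0 < m) (hmn : m < n) (r c : BP n) :
    (lkGram (t : R) q n * (LKgen (↑t⁻¹ : R) ↑q⁻¹ n m)ᵀ) r c =
      lkPullbackInv t q m (fun a b => lkForm (t : R) q a b c.val.1 c.val.2) r.val.1 r.val.2 := by
  rw [← lkPullback_lkForm_eq_lkPullbackInv t q r.2.2 c.2.2, ← LKgen_mulVec _ _ hm hmn]
  exact dotProduct_comm _ _

theorem LKgen_mul_lkGram_mul_transpose (t q : Rˣ) (hm : 0 < m) (hmn : m < n) :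
    LKgen (t : R) q n m * lkGram (t : R) q n * (LKgen (↑t⁻¹ : R) ↑q⁻¹ n m)ᵀ =
      lkGram (t : R) q n := by
  ext r c
  calc (LKgen (t : R) q n m * lkGram (t : R) q n * (LKgen (↑t⁻¹ : R) ↑q⁻¹ n m)ᵀ) r c
    _ = (LKgen (t : R) q n m *ᵥ
          fun y => (lkGram (t : R) q n * (LKgen (↑t⁻¹ : R) ↑q⁻¹ n m)ᵀ) y c) r := by
      rw [Matrix.mul_assoc]; rfl
    _ = lkPullback (t : R) q m (lkPullbackInv t q m
          fun a b => lkForm (t : R) q a b c.val.1 c.val.2) r.val.1 r.val.2 := by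
      simp only [lkGram_mul_transpose_LKgen t q hm hmn, LKgen_mulVec _ _ hm hmn]
    _ = lkGram (t : R) q n r c := lkPullback_lkPullbackInv t q _ r.2.2

end Generator

section Specialization

variable {R S : Type*} [CommRing R] [CommRing S]

theorem map_lkForm (φ : R →+* S) (t q : R) (i j k l : ℕ) :
    φ (lkForm t q i j k l) = lkForm (φ t) (φ q) i j k l := by
  simp only [lkForm]
  split_ifs <;> simp

theorem lkForm_mem (A : Subring R) {t q : R} (ht : t ∈ A) (hq : q ∈ A) (i j k l : ℕ) :
    lkForm t q i j k l ∈ A :=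
  map_lkForm A.subtype ⟨t, ht⟩ ⟨q, hq⟩ i j k l ▸ SetLike.coe_mem _

theorem map_det_lkGram (φ : R →+* S) (t q : R) (n : ℕ) :
    φ (lkGram t q n).det = (lkGram (φ t) (φ q) n).det := by
  rw [RingHom.map_det]
  congr 1
  ext r c
  exact map_lkForm φ t q _ _ _ _

theorem lkGram_one_right (t : R) (n : ℕ) :
    lkGram t 1 n = diagonal fun _ => (t - 1) * (1 + t) := by
  ext r c
  simp [lkGram, lkForm, diagonal_apply, Subtype.ext_iff, Prod.ext_iff, Fin.ext_iff]

theorem aeval_det_lkGram {k : Type*} [CommRing k] [Algebra k R] (x y : R) (n : ℕ) :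
    MvPolynomial.aeval ![x, y]
      (lkGram (MvPolynomial.X 0 : MvPolynomial (Fin 2) k) (MvPolynomial.X 1) n).det =
        (lkGram x y n).det := by
  simpa using map_det_lkGram (MvPolynomial.aeval (R := k) ![x, y]).toRingHom
    (MvPolynomial.X 0) (MvPolynomial.X 1) n

theorem det_lkGram_X_ne_zero (k : Type*) [CommRing k] [Nontrivial k] (n : ℕ) :
    (lkGram (MvPolynomial.X 0 : MvPolynomial (Fin 2) k) (MvPolynomial.X 1) n).det ≠ 0 := by
  intro h
  have h_one : (lkGram (Polynomial.X : Polynomial k) 1 n).det = 0 := by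
    rw [← aeval_det_lkGram (k := k), h, map_zero]
  have h_monic : ((Polynomial.X - 1) * (1 + Polynomial.X) : Polynomial k).Monic := by
    rw [add_comm]
    exact (Polynomial.monic_X_sub_C 1).mul (Polynomial.monic_X_add_C 1)
  rw [lkGram_one_right, det_diagonal] at h_one
  exact (Polynomial.monic_prod_of_monic _ _ fun _ _ => h_monic).ne_zero h_one

theorem det_lkGram_ne_zero {k : Type*} [CommRing k] [Nontrivial k] [Algebra k R] {t q : R}
    (htq : AlgebraicIndependent k ![t, q]) (n : ℕ) : (lkGram t q n).det ≠ 0 := by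
  rw [← aeval_det_lkGram (k := k)]
  exact (map_ne_zero_iff _ htq).2 (det_lkGram_X_ne_zero k n)

end Specialization

/-- The action `g • J = g J g*` of invertible matrices on sesquilinear forms, where `g*` is the
transpose of the entrywise image of `g` under `conj`; `conj` need not be an involution. -/
abbrev sesquilinearAction {ι R : Type*} [Fintype ι] [DecidableEq ι] [CommRing R]
    (conj : R →+* R) : MulAction (GL ι R) (Matrix ι ι R) where
  smul g J := (g : Matrix ι ι R) * J * ((g : Matrix ι ι R).map conj)ᵀ
  one_smul J := by
    change (1 : Matrix ι ι R) * J * ((1 : Matrix ι ι R).map conj)ᵀ = J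
    rw [Matrix.map_one _ (map_zero conj) (map_one conj), transpose_one, Matrix.one_mul,
      Matrix.mul_one]
  mul_smul g h J := by
    change (g * h : Matrix ι ι R) * J * ((g * h : Matrix ι ι R).map conj)ᵀ =
      g * (h * J * ((h : Matrix ι ι R).map conj)ᵀ) * ((g : Matrix ι ι R).map conj)ᵀ
    simp only [Matrix.map_mul, transpose_mul, Matrix.mul_assoc]

/-- The subgroup of invertible matrices preserving the sesquilinear form `J`. -/
def formStabilizer {ι R : Type*} [Fintype ι] [DecidableEq ι] [CommRing R] (conj : R →+* R)
    (J : Matrix ι ι R) : Subgroup (GL ι R) :=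
  @MulAction.stabilizer _ _ _ (sesquilinearAction conj) J

theorem mem_formStabilizer {ι R : Type*} [Fintype ι] [DecidableEq ι] [CommRing R]
    {conj : R →+* R} {J : Matrix ι ι R} {g : GL ι R} :
    g ∈ formStabilizer conj J ↔
      (g : Matrix ι ι R) * J * ((g : Matrix ι ι R).map conj)ᵀ = J :=
  Iff.rfl

theorem lk_unitary_general {k R : Type*} [CommRing k] [Nontrivial k] [CommRing R] [Algebra k R]
    (n : ℕ) (t q : Rˣ) (htq : AlgebraicIndependent k ![(t : R), (q : R)])
    (K : Braid n →* GL (BP n) R)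
    (hK : ∀ m : Fin (n - 1),
      (K (σg m) : Matrix (BP n) (BP n) R) = LKgen (t : R) q n ((m : ℕ) + 1))
    (conj : R →+* R) (hct : conj t = ↑t⁻¹) (hcq : conj q = ↑q⁻¹) :
    ∃ J : Matrix (BP n) (BP n) R,
      (∀ r c, J r c ∈ Subring.closure {(t : R), ↑t⁻¹, (q : R), ↑q⁻¹}) ∧
      J.det ≠ 0 ∧
      ∀ β : Braid n,
        (K β : Matrix (BP n) (BP n) R) * J * ((K β : Matrix (BP n) (BP n) R).map conj)ᵀ
          = J := by
  refine ⟨lkGram (t : R) q n, fun r c => ?_, det_lkGram_ne_zero htq n, fun β => ?_⟩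
  · have ht : (t : R) ∈ Subring.closure {(t : R), ↑t⁻¹, (q : R), ↑q⁻¹} :=
      Subring.subset_closure (by simp)
    have hq : (q : R) ∈ Subring.closure {(t : R), ↑t⁻¹, (q : R), ↑q⁻¹} :=
      Subring.subset_closure (by simp)
    exact lkForm_mem _ ht hq _ _ _ _
  · have generator_mem (m : Fin (n - 1)) :
        σg m ∈ (formStabilizer conj (lkGram (t : R) q n)).comap K := by
      rw [Subgroup.mem_comap, mem_formStabilizer, hK, map_LKgen, hct, hcq]
      exact LKgen_mul_lkGram_mul_transpose t q (by omega) (by omega)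
    exact PresentedGroup.generated_by _ _ generator_mem β

theorem algebraicIndependent_tt_qq : AlgebraicIndependent ℚ ![tt, qq] := by
  have h := (MvPolynomial.algebraicIndependent_X (Fin 2) ℚ).map'
    (f := IsScalarTower.toAlgHom ℚ _ F2) (IsFractionRing.injective _ F2)
  convert h using 1
  ext i
  fin_cases i <;> rfl

/-- **unitarity of the Lawrence–Krammer representation.**
There is a non-singular matrix `J` over `ℤ[t^{±1}, q^{±1}]` such that every
Lawrence–Krammer matrix `M = K(β)` satisfies `M J M* = J`, where `M*` is the transpose
of `M` with `t, q` replaced by their inverses. -/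
theorem lk_unitary (n : ℕ) (K : Braid n →* GL (BP n) F2)
    (hK : ∀ m : Fin (n - 1),
      (K (σg m) : Matrix (BP n) (BP n) F2) = LKgen tt qq n ((m : ℕ) + 1))
    (conj : F2 →+* F2) (hct : conj tt = tt⁻¹) (hcq : conj qq = qq⁻¹) :
    ∃ J : Matrix (BP n) (BP n) F2,
      (∀ r c, J r c ∈ Subring.closure {tt, tt⁻¹, qq, qq⁻¹}) ∧
      J.det ≠ 0 ∧
      ∀ β : Braid n,
        (K β : Matrix (BP n) (BP n) F2) * J * ((K β : Matrix (BP n) (BP n) F2).map conj)ᵀ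
          = J := by
  exact lk_unitary_general n (Units.mk0 tt (algebraicIndependent_tt_qq.ne_zero 0))
    (Units.mk0 qq (algebraicIndependent_tt_qq.ne_zero 1))
    algebraicIndependent_tt_qq K hK conj hct hcq
end
end

section
/- There exists an invertible n(n−1)/2 × n(n−1)/2 matrix R over ℤ[t^{±1}, q^{±1}] such that for every n-braid β, K(β^{−1})(t,q) = R^{−1} K(β^rev)(t^{−1}, q^{−1}) R. -/
open Matrix

noncomputable section

/-!
Let `p = (m, m + 1)` and let `ρ(q)` be the unreduced Burau matrix of `σ_m`. The Lawrence–Krammer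
matrix of `σ_m` agrees with the restriction of `ρ(q) ⊗ ρ(q)` to the pairs `i < j` in every column
except `p`, where that restriction vanishes; so it is this restriction plus a rank-one correction
`w ⊗ e_p`.

There are an upper triangular `L` and a lower triangular `Q` with `ρ(q⁻¹) L ρ(q) = L` and
`ρ(q⁻¹) Q ρ(q) = Q` for all `m` at once. The matrix `R` is the restriction of `L ⊗ Q` to pairs.
Away from column `p` the identity `K(σ_m)(t⁻¹, q⁻¹) R K(σ_m)(t, q) = R` is then the tensor product
of these two relations. In column `p` it amounts to `K(σ_m)(t⁻¹, q⁻¹) R w = R e_p`, and `R w` is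
explicit because `L` and `Q` have indicator functions of initial and final segments as
eigenvectors.

Both sides of the claim are homomorphisms of `β` once inverted, so this identity on the generators
is enough.
-/

open scoped Kronecker

namespace LawrenceKrammer

lemma det_of_blockTriangular_injective {A ι α : Type*} [CommRing A] [Fintype ι] [DecidableEq ι]
    [LinearOrder α] {M : Matrix ι ι A} {f : ι → α} (hf : Function.Injective f)
    (hM : M.BlockTriangular f) : M.det = ∏ i, M i i := by
  let _ : LinearOrder ι := LinearOrder.lift' f hf
  exact Matrix.det_of_isUpperTriangular fun i j hij => hM hij

lemma map_inv_eq_inv_mul_mul_of_closure_eq_top {G H : Type*} [Group G] [Group H] {S : Set G}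
    (hS : Subgroup.closure S = ⊤) (f : G →* H) (ψ : G →* Hᵐᵒᵖ) (r : H)
    (h : ∀ s ∈ S, (ψ s).unop * r * f s = r) (g : G) : f g⁻¹ = r⁻¹ * (ψ g).unop * r := by
  let ψ' : G →* H :=
    (MulAut.conj r⁻¹).toMonoidHom.comp ((MulEquiv.inv' H).symm.toMonoidHom.comp ψ)
  have ψ'_apply (g : G) : ψ' g = r⁻¹ * (ψ g).unop⁻¹ * r := by simp [ψ']
  have f_eq : f = ψ' := MonoidHom.eq_of_eqOn_dense hS fun s hs => by
    rw [ψ'_apply, mul_assoc, eq_inv_mul_iff_mul_eq, eq_inv_mul_iff_mul_eq, ← mul_assoc, h s hs]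
  rw [f_eq, map_inv, ψ'_apply]
  group

section Burau

variable {A ι κ : Type*} [CommRing A] [Fintype ι] [DecidableEq ι]

/-- The unreduced Burau matrix `ρ(q)` of the Artin generator exchanging the strands `a` and `b`,
acting on the span of an arbitrary index type `ι`. -/
def burau (q : A) (a b : ι) : Matrix ι ι A := fun i k =>
  if i = a then (1 - q) * (1 : Matrix ι ι A) a k + q * (1 : Matrix ι ι A) b k
  else if i = b then (1 : Matrix ι ι A) a k
  else (1 : Matrix ι ι A) i k

lemma burau_mulVec_apply (q : A) (a b : ι) (x : ι → A) (i : ι) :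
    (burau q a b *ᵥ x) i =
      if i = a then (1 - q) * x a + q * x b else if i = b then x a else x i := by
  simp only [mulVec, dotProduct, burau, one_apply]
  split_ifs <;> simp [add_mul, Finset.sum_add_distrib]

lemma burau_mulVec_single (q : A) {a b : ι} (hab : a ≠ b) :
    burau q a b *ᵥ Pi.single b 1 = q • Pi.single a 1 := by
  ext i
  simp only [burau_mulVec_apply, Pi.smul_apply, smul_eq_mul, Pi.single_apply]
  grind

lemma burau_mulVec_indicator_Iio [Preorder ι] (q : A) {a b : ι} (hab : a < b) :
    burau q a b *ᵥ (Set.Iio a).indicator 1 = (Set.Iio a).indicator 1 := by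
  classical
  ext i
  simp only [burau_mulVec_apply, Set.indicator_apply, Set.mem_Iio, Pi.one_apply]
  grind [lt_asymm]

lemma burau_mul_apply (q : A) (a b : ι) (M : Matrix ι κ A) (i : ι) (k : κ) :
    (burau q a b * M) i k =
      if i = a then (1 - q) * M a k + q * M b k else if i = b then M a k else M i k :=
  burau_mulVec_apply q a b (M.col k) i

lemma mul_burau_apply (q : A) {a b : ι} (hab : a ≠ b) (M : Matrix κ ι A) (i : κ) (k : ι) :
    (M * burau q a b) i k =
      if k = a then (1 - q) * M i a + M i b else if k = b then q * M i a else M i k := by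
  have burau_col (i : ι) : burau q a b i k =
      if k = a then (if i = a then 1 - q else 0) + (if i = b then 1 else 0)
      else if k = b then if i = a then q else 0
      else if i = k then 1 else 0 := by
    simp only [burau, one_apply]
    grind
  simp only [mul_apply, burau_col]
  split_ifs <;> simp [mul_add, Finset.sum_add_distrib, mul_comm]

lemma mulVec_col_of_mul_mul_burau_eq (q : Aˣ) {a b : ι} (hab : a ≠ b) {X : Matrix κ ι A}
    {M : Matrix ι ι A} {N : Matrix κ ι A} (h : X * M * burau (q : A) a b = N) :
    X *ᵥ M.col a = (↑q⁻¹ : A) • N.col b := by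
  ext i
  have entry : (q : A) * (X * M) i a = N i b := by
    rw [← h, mul_burau_apply _ hab, if_neg hab.symm, if_pos rfl]
  rw [Pi.smul_apply, Matrix.col_apply, ← entry, smul_eq_mul, Units.inv_mul_cancel_left]
  rfl

end Burau

section Factors

variable {A : Type*} [CommRing A] (q : Aˣ) {n : ℕ}

/-- The upper triangular matrix `L` with `ρ(q⁻¹) L ρ(q) = L` for every adjacent pair of strands;
it acts on the first coordinate of a pair. -/
def leftFactor (n : ℕ) : Matrix (Fin (n + 1)) (Fin (n + 1)) A := fun i k =>
  if k = i then (q : A) ^ (k : ℕ) else if i < k then (q : A) ^ (k : ℕ) * (1 - ↑q⁻¹) else 0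

/-- The lower triangular matrix `Q` with `ρ(q⁻¹) Q ρ(q) = Q` for every adjacent pair of strands;
it acts on the second coordinate of a pair. -/
def rightFactor (n : ℕ) : Matrix (Fin (n + 1)) (Fin (n + 1)) A := fun j l =>
  if l = j then (q : A) ^ (l : ℕ) else if l < j then (q : A) ^ (l : ℕ) * (1 - q) else 0

lemma burau_inv_mul_leftFactor_mul_burau {a b : Fin (n + 1)} (hab : (b : ℕ) = a + 1) :
    burau (↑q⁻¹ : A) a b * leftFactor q n * burau (q : A) a b = leftFactor q n := by
  have hq : (q : A) * ↑q⁻¹ = 1 := q.mul_inv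
  ext i k
  simp only [mul_burau_apply _ (show a ≠ b by grind), burau_mul_apply]
  simp only [leftFactor, Fin.ext_iff, Fin.lt_def, hab]
  grind

lemma burau_inv_mul_rightFactor_mul_burau {a b : Fin (n + 1)} (hab : (b : ℕ) = a + 1) :
    burau (↑q⁻¹ : A) a b * rightFactor q n * burau (q : A) a b = rightFactor q n := by
  have hq : (q : A) * ↑q⁻¹ = 1 := q.mul_inv
  ext j l
  simp only [mul_burau_apply _ (show a ≠ b by grind), burau_mul_apply]
  simp only [rightFactor, Fin.ext_iff, Fin.lt_def, hab]
  grind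

lemma rightFactor_col (l : Fin (n + 1)) :
    (rightFactor q n).col l =
      (q : A) ^ (l : ℕ) • Pi.single l 1
        + ((q : A) ^ (l : ℕ) * (1 - q)) • (Set.Ioi l).indicator 1 := by
  ext j
  simp only [rightFactor, Matrix.col_apply, Pi.add_apply, Pi.smul_apply, smul_eq_mul,
    Pi.single_apply, Set.indicator_apply, Set.mem_Ioi, Pi.one_apply]
  grind

lemma leftFactor_mulVec_indicator_Iio (a : Fin (n + 1)) :
    leftFactor q n *ᵥ (Set.Iio a).indicator 1 =
      ((q : A) ^ (a : ℕ) * ↑q⁻¹) • (Set.Iio a).indicator 1 := by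
  ext i
  let S (k : ℕ) : A := if (i : ℕ) < k then (q : A) ^ k * ↑q⁻¹ else 0
  have leftFactor_eq_sub (k : Fin (n + 1)) : leftFactor q n i k = S (k + 1) - S k := by
    have hq : (q : A) * ↑q⁻¹ = 1 := q.mul_inv
    simp only [leftFactor, S, Fin.ext_iff, Fin.lt_def]
    grind
  calc (leftFactor q n *ᵥ (Set.Iio a).indicator 1) i
      = ∑ k ∈ Finset.Iio a, leftFactor q n i k := by
        simp [mulVec, dotProduct, Set.indicator_apply, ← Finset.sum_filter,
          Finset.filter_gt_eq_Iio]
    _ = ∑ k ∈ (Finset.Iio a).map Fin.valEmbedding, (S (k + 1) - S k) := by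
        simp only [leftFactor_eq_sub, Finset.sum_map, Fin.valEmbedding_apply]
    _ = S a - S 0 := by rw [Fin.map_valEmbedding_Iio, Nat.Iio_eq_range, Finset.sum_range_sub]
    _ = _ := by simp [S, Set.indicator_apply]

lemma rightFactor_mulVec_indicator_Ioi (b : Fin (n + 1)) :
    rightFactor q n *ᵥ (Set.Ioi b).indicator 1 =
      (q : A) ^ (b + 1 : ℕ) • (Set.Ioi b).indicator 1 := by
  ext j
  let S (l : ℕ) : A := if l ≤ j then -(q : A) ^ l else 0
  have rightFactor_eq_sub (l : Fin (n + 1)) : rightFactor q n j l = S (l + 1) - S l := by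
    simp only [rightFactor, S, Fin.ext_iff, Fin.lt_def]
    grind
  calc (rightFactor q n *ᵥ (Set.Ioi b).indicator 1) j
      = ∑ l ∈ Finset.Ioi b, rightFactor q n j l := by
        simp [mulVec, dotProduct, Set.indicator_apply, ← Finset.sum_filter,
          Finset.filter_lt_eq_Ioi]
    _ = ∑ l ∈ (Finset.Ioi b).map Fin.valEmbedding, (S (l + 1) - S l) := by
        simp only [rightFactor_eq_sub, Finset.sum_map, Fin.valEmbedding_apply]
    _ = S (n + 1) - S (b + 1) := by
        rw [Fin.map_valEmbedding_Ioi, ← Finset.Ico_add_one_left_eq_Ioo,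
          Finset.sum_Ico_sub _ (by omega)]
    _ = _ := by
        simp only [S, Pi.smul_apply, smul_eq_mul, Set.indicator_apply, Set.mem_Ioi, Pi.one_apply,
          Fin.lt_def]
        grind

end Factors

lemma LKgen_map {A B : Type*} [CommRing A] [CommRing B] (f : A →+* B) (t q : A) (n m : ℕ) :
    (LKgen t q n m).map f = LKgen (f t) (f q) n m := by
  ext r c
  simp only [Matrix.map_apply, LKgen, ee]
  split_ifs <;> simp

section Pairs

variable {A : Type*} [CommRing A] {n : ℕ}

/-- The elementary tensor `x ⊗ y`, restricted to the pairs indexing the Lawrence–Krammer basis. -/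
def pairTensor (x y : Fin (n + 1) → A) : BP n → A := fun d => x d.val.1 * y d.val.2

/-- The compression of `M ⊗ N` to the pairs indexing the Lawrence–Krammer basis. It is
multiplicative only when no intermediate pair falls outside this set. -/
def pairKronecker (M N : Matrix (Fin (n + 1)) (Fin (n + 1)) A) : Matrix (BP n) (BP n) A :=
  (M ⊗ₖ N).submatrix Subtype.val Subtype.val

lemma pairKronecker_apply (M N : Matrix (Fin (n + 1)) (Fin (n + 1)) A) (r c : BP n) :
    pairKronecker M N r c = M r.val.1 c.val.1 * N r.val.2 c.val.2 := rfl

lemma pairKronecker_mulVec_pairTensor (M N : Matrix (Fin (n + 1)) (Fin (n + 1)) A)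
    (x y : Fin (n + 1) → A) (r : BP n)
    (h : ∀ k l : Fin (n + 1), ¬(0 < (k : ℕ) ∧ (k : ℕ) < l) →
      M r.val.1 k * N r.val.2 l * (x k * y l) = 0) :
    (pairKronecker M N *ᵥ pairTensor x y) r = pairTensor (M *ᵥ x) (N *ᵥ y) r := by
  calc (pairKronecker M N *ᵥ pairTensor x y) r
      = ∑ d : Fin (n + 1) × Fin (n + 1), M r.val.1 d.1 * N r.val.2 d.2 * (x d.1 * y d.2) :=
        Fintype.sum_of_injective _ Subtype.val_injective _ _ (by simpa using h) fun _ => rfl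
    _ = pairTensor (M *ᵥ x) (N *ᵥ y) r := by
        simp only [pairTensor, mulVec, dotProduct, Finset.sum_mul_sum, Fintype.sum_prod_type,
          mul_mul_mul_comm]

/-- The compression of `ρ(q) ⊗ ρ(q)` to pairs, where `ρ(q)` exchanges the two strands of `p`. -/
def pairBurau (q : A) (p : BP n) : Matrix (BP n) (BP n) A :=
  pairKronecker (burau q p.val.1 p.val.2) (burau q p.val.1 p.val.2)

/-- The column `w` of the Lawrence–Krammer matrix of `σ_m` indexed by the adjacent pair
`p = (m, m + 1)`. -/
def adjacentColumn (t q : A) (p : BP n) : BP n → A :=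
  -(t * q ^ 2) • Pi.single p 1
    + (t * q * (1 - q)) • pairTensor (Pi.single p.val.1 1) ((Set.Ioi p.val.2).indicator 1)
    - (q * (1 - q)) • pairTensor ((Set.Iio p.val.1).indicator 1) (Pi.single p.val.1 1)

variable (q : A) {p r c : BP n}

lemma pairBurau_apply_left : pairBurau q p p c = 0 := by
  obtain ⟨⟨a, b⟩, ha, hab⟩ := p
  obtain ⟨⟨k, l⟩, hk, hkl⟩ := c
  simp only [pairBurau, pairKronecker_apply, burau, one_apply, Fin.ext_iff] at *
  grind

lemma pairBurau_apply_right : pairBurau q p r p = 0 := by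
  obtain ⟨⟨a, b⟩, ha, hab⟩ := p
  obtain ⟨⟨i, j⟩, hi, hij⟩ := r
  simp only [pairBurau, pairKronecker_apply, burau, one_apply, Fin.ext_iff] at *
  grind

variable (hp : (p.val.2 : ℕ) = p.val.1 + 1)

include hp

lemma burau_mul_burau_eq_zero_of_row_ne (hr : r ≠ p) {k l : Fin (n + 1)}
    (hkl : ¬(0 < (k : ℕ) ∧ (k : ℕ) < l)) :
    burau q p.val.1 p.val.2 r.val.1 k * burau q p.val.1 p.val.2 r.val.2 l = 0 := by
  obtain ⟨⟨a, b⟩, ha, hab⟩ := p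
  obtain ⟨⟨i, j⟩, hi, hij⟩ := r
  simp only [burau, one_apply, ne_eq, Subtype.mk.injEq, Prod.mk.injEq, Fin.ext_iff] at *
  grind

lemma burau_mul_burau_eq_zero_of_col_ne (hc : c ≠ p) {i j : Fin (n + 1)}
    (hij : ¬(0 < (i : ℕ) ∧ (i : ℕ) < j)) :
    burau q p.val.1 p.val.2 i c.val.1 * burau q p.val.1 p.val.2 j c.val.2 = 0 := by
  obtain ⟨⟨a, b⟩, ha, hab⟩ := p
  obtain ⟨⟨k, l⟩, hk, hkl⟩ := c
  simp only [burau, one_apply, ne_eq, Subtype.mk.injEq, Prod.mk.injEq, Fin.ext_iff] at *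
  grind

lemma LKgen_eq_pairBurau_add_vecMulVec (t : A) :
    LKgen t q n p.val.1 =
      pairBurau q p + vecMulVec (adjacentColumn t q p) (Pi.single p 1) := by
  ext r c
  obtain ⟨⟨a, b⟩, ha, hab⟩ := p
  obtain ⟨⟨i, j⟩, hi, hij⟩ := r
  obtain ⟨⟨k, l⟩, hk, hkl⟩ := c
  simp only [LKgen, ee, Matrix.add_apply, pairBurau, pairKronecker_apply, burau,
    one_apply, vecMulVec_apply, adjacentColumn, pairTensor, Pi.add_apply, Pi.sub_apply,
    Pi.smul_apply, smul_eq_mul, Pi.single_apply, Set.indicator_apply, Set.mem_Ioi, Set.mem_Iio,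
    Pi.one_apply, Subtype.mk.injEq, Prod.mk.injEq, Fin.ext_iff, Fin.lt_def] at *
  grind

lemma LKgen_mulVec (t : A) (x : BP n → A) :
    LKgen t q n p.val.1 *ᵥ x = pairBurau q p *ᵥ x + x p • adjacentColumn t q p := by
  rw [LKgen_eq_pairBurau_add_vecMulVec q hp, add_mulVec, vecMulVec_mulVec,
    single_one_dotProduct, op_smul_eq_smul]

lemma LKgen_mulVec_apply_self (t : A) (x : BP n → A) :
    (LKgen t q n p.val.1 *ᵥ x) p = -(t * q ^ 2) * x p := by
  have pairBurau_mulVec_apply_self : (pairBurau q p *ᵥ x) p = 0 := by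
    simp [mulVec, dotProduct, pairBurau_apply_left q]
  rw [LKgen_mulVec q hp, Pi.add_apply, pairBurau_mulVec_apply_self]
  simp [adjacentColumn, pairTensor, mul_comm]

lemma LKgen_col_self (t : A) : (LKgen t q n p.val.1).col p = adjacentColumn t q p := by
  ext r
  simp [LKgen_eq_pairBurau_add_vecMulVec q hp, pairBurau_apply_right q, vecMulVec_apply]

lemma LKgen_col_of_ne (t : A) (hc : c ≠ p) :
    (LKgen t q n p.val.1).col c = (pairBurau q p).col c := by
  ext r
  simp [LKgen_eq_pairBurau_add_vecMulVec q hp, vecMulVec_apply, hc]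

lemma pairBurau_mulVec_pairTensor (x y : Fin (n + 1) → A) (hr : r ≠ p) :
    (pairBurau q p *ᵥ pairTensor x y) r =
      pairTensor (burau q p.val.1 p.val.2 *ᵥ x) (burau q p.val.1 p.val.2 *ᵥ y) r :=
  pairKronecker_mulVec_pairTensor _ _ _ _ r fun _ _ hkl =>
    mul_eq_zero_of_left (burau_mul_burau_eq_zero_of_row_ne q hp hr hkl) _

lemma pairKronecker_mulVec_pairBurau_col (M N : Matrix (Fin (n + 1)) (Fin (n + 1)) A)
    (hc : c ≠ p) :
    pairKronecker M N *ᵥ (pairBurau q p).col c =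
      pairTensor ((M * burau q p.val.1 p.val.2).col c.val.1)
        ((N * burau q p.val.1 p.val.2).col c.val.2) :=
  funext fun r => pairKronecker_mulVec_pairTensor _ _ _ _ r fun _ _ hkl =>
    mul_eq_zero_of_right _ (burau_mul_burau_eq_zero_of_col_ne q hp hc hkl)

end Pairs

section Intertwiner

variable {A : Type*} [CommRing A] (q : Aˣ) {n : ℕ}

/-- The matrix `R` conjugating the reversed braid at `(t⁻¹, q⁻¹)` to the inverse braid at
`(t, q)`. -/
def intertwiner (n : ℕ) : Matrix (BP n) (BP n) A :=
  pairKronecker (leftFactor q n) (rightFactor q n)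

lemma intertwiner_apply_self (d : BP n) :
    intertwiner q n d d = (q : A) ^ (d.val.1 + d.val.2 : ℕ) := by
  simp [intertwiner, pairKronecker_apply, leftFactor, rightFactor, pow_add]

lemma det_intertwiner : (intertwiner q n).det = (q : A) ^ ∑ d : BP n, (d.val.1 + d.val.2 : ℕ) := by
  let f : BP n → Fin (n + 1) ×ₗ (Fin (n + 1))ᵒᵈ :=
    fun d => toLex (d.val.1, OrderDual.toDual d.val.2)
  have hf : Function.Injective f := by
    rintro ⟨⟨a, b⟩, hab⟩ ⟨⟨i, j⟩, hij⟩ h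
    simpa [f] using h
  have htri : (intertwiner q n).BlockTriangular f := by
    intro r c hlt
    simp only [f, Prod.Lex.toLex_lt_toLex, OrderDual.toDual_lt_toDual] at hlt
    simp only [intertwiner, pairKronecker_apply, leftFactor, rightFactor]
    grind
  rw [det_of_blockTriangular_injective hf htri, ← Finset.prod_pow_eq_pow_sum]
  exact Finset.prod_congr rfl fun d _ => intertwiner_apply_self q d

lemma intertwiner_mem {S : Subring A} (hq : (q : A) ∈ S) (hq' : (↑q⁻¹ : A) ∈ S) (r c : BP n) :
    intertwiner q n r c ∈ S := by
  have leftFactor_mem (i k : Fin (n + 1)) : leftFactor q n i k ∈ S := by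
    unfold leftFactor
    split_ifs
    exacts [pow_mem hq _, mul_mem (pow_mem hq _) (sub_mem (one_mem _) hq'), zero_mem _]
  have rightFactor_mem (j l : Fin (n + 1)) : rightFactor q n j l ∈ S := by
    unfold rightFactor
    split_ifs
    exacts [pow_mem hq _, mul_mem (pow_mem hq _) (sub_mem (one_mem _) hq), zero_mem _]
  exact mul_mem (leftFactor_mem _ _) (rightFactor_mem _ _)

/-- The vector `R w`, in closed form, where `w` is the column `adjacentColumn t q p`. -/
def adjacentImage (t : A) (p : BP n) : BP n → A :=
  -(t * (q : A) ^ (p.val.1 + 3 : ℕ)) •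
      pairTensor ((leftFactor q n).col p.val.1) (Pi.single p.val.2 1)
    - ((1 - q) * (q : A) ^ (p.val.1 : ℕ)) •
      pairTensor ((Set.Iio p.val.1).indicator 1) ((rightFactor q n).col p.val.1)

variable {p r c : BP n}

lemma adjacentImage_apply_self (t : A) :
    adjacentImage q t p p = -t * q ^ (2 * p.val.1 + 3 : ℕ) := by
  simp only [adjacentImage, pairTensor, leftFactor, Pi.sub_apply, Pi.smul_apply, smul_eq_mul,
    Matrix.col_apply, if_true, Pi.single_eq_same, Set.indicator_apply, Set.mem_Iio, lt_irrefl,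
    if_false]
  ring

lemma intertwiner_mulVec_pairTensor_single_indicator_Ioi :
    intertwiner q n *ᵥ pairTensor (Pi.single p.val.1 1) ((Set.Ioi p.val.2).indicator 1) =
      (q : A) ^ (p.val.2 + 1 : ℕ) •
        pairTensor ((leftFactor q n).col p.val.1) ((Set.Ioi p.val.2).indicator 1) := by
  ext r
  rw [intertwiner, pairKronecker_mulVec_pairTensor, mulVec_single_one,
    rightFactor_mulVec_indicator_Ioi]
  · simp only [pairTensor, Pi.smul_apply, smul_eq_mul, mul_left_comm]
  · intro k l hkl
    have := p.prop
    simp only [Pi.single_apply, Set.indicator_apply, Set.mem_Ioi, Fin.lt_def, Fin.ext_iff] at *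
    grind

lemma intertwiner_mulVec_pairTensor_indicator_Iio_single :
    intertwiner q n *ᵥ pairTensor ((Set.Iio p.val.1).indicator 1) (Pi.single p.val.1 1) =
      ((q : A) ^ (p.val.1 : ℕ) * ↑q⁻¹) •
        pairTensor ((Set.Iio p.val.1).indicator 1) ((rightFactor q n).col p.val.1) := by
  ext r
  rw [intertwiner, pairKronecker_mulVec_pairTensor, mulVec_single_one,
    leftFactor_mulVec_indicator_Iio]
  · simp only [pairTensor, Pi.smul_apply, smul_eq_mul, mul_assoc]
  · intro k l hkl
    have := r.prop
    simp only [Pi.single_apply, Set.indicator_apply, Set.mem_Iio, Fin.lt_def, Fin.ext_iff,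
      leftFactor] at *
    grind

variable (hp : (p.val.2 : ℕ) = p.val.1 + 1)

include hp

lemma intertwiner_apply_eq_zero_of_ne (hc : c ≠ p) : intertwiner q n p c = 0 := by
  obtain ⟨⟨a, b⟩, ha, hab⟩ := p
  obtain ⟨⟨k, l⟩, hk, hkl⟩ := c
  simp only [intertwiner, pairKronecker_apply, leftFactor, rightFactor,
    ne_eq, Subtype.mk.injEq, Prod.mk.injEq, Fin.ext_iff, Fin.lt_def] at *
  grind

lemma intertwiner_mulVec_apply_self (x : BP n → A) :
    (intertwiner q n *ᵥ x) p = (q : A) ^ (2 * p.val.1 + 1 : ℕ) * x p := by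
  rw [mulVec, dotProduct, Fintype.sum_eq_single p fun c hc => by
    rw [intertwiner_apply_eq_zero_of_ne q hp hc, zero_mul], intertwiner_apply_self, hp]
  ring_nf

lemma intertwiner_mulVec_adjacentColumn (t : A) :
    intertwiner q n *ᵥ adjacentColumn t q p = adjacentImage q t p := by
  have hq : (q : A) * ↑q⁻¹ = 1 := q.mul_inv
  simp only [adjacentColumn, mulVec_add, mulVec_sub, mulVec_smul, mulVec_single_one,
    intertwiner_mulVec_pairTensor_single_indicator_Ioi,
    intertwiner_mulVec_pairTensor_indicator_Iio_single]
  have intertwiner_col : (intertwiner q n).col p =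
      pairTensor ((leftFactor q n).col p.val.1) ((rightFactor q n).col p.val.2) := rfl
  ext r
  simp only [intertwiner_col, rightFactor_col q p.val.2, adjacentImage, pairTensor, Pi.add_apply,
    Pi.sub_apply, Pi.smul_apply, smul_eq_mul, hp]
  grind

lemma LKgen_inv_mulVec_intertwiner_mulVec_pairBurau_col (s : A) (hc : c ≠ p) :
    LKgen s (↑q⁻¹ : A) n p.val.1 *ᵥ (intertwiner q n *ᵥ (pairBurau (q : A) p).col c) =
      (intertwiner q n).col c := by
  have image_apply_self : (intertwiner q n *ᵥ (pairBurau (q : A) p).col c) p = 0 := by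
    rw [intertwiner_mulVec_apply_self q hp, Matrix.col_apply, pairBurau_apply_left, mul_zero]
  ext r
  by_cases hr : r = p
  · rw [hr, LKgen_mulVec_apply_self _ hp, image_apply_self, mul_zero, Matrix.col_apply,
      intertwiner_apply_eq_zero_of_ne q hp hc]
  rw [LKgen_mulVec _ hp, image_apply_self, zero_smul, add_zero, intertwiner,
    pairKronecker_mulVec_pairBurau_col _ hp _ _ hc, pairBurau_mulVec_pairTensor _ hp _ _ hr]
  calc
    _ = (burau (↑q⁻¹ : A) p.val.1 p.val.2 * (leftFactor q n * burau (q : A) p.val.1 p.val.2))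
            r.val.1 c.val.1 *
          (burau (↑q⁻¹ : A) p.val.1 p.val.2 * (rightFactor q n * burau (q : A) p.val.1 p.val.2))
            r.val.2 c.val.2 := rfl
    _ = leftFactor q n r.val.1 c.val.1 * rightFactor q n r.val.2 c.val.2 := by
      rw [← Matrix.mul_assoc, ← Matrix.mul_assoc, burau_inv_mul_leftFactor_mul_burau q hp,
        burau_inv_mul_rightFactor_mul_burau q hp]

lemma pairBurau_inv_mulVec_adjacentImage (t : A) (hr : r ≠ p) :
    (pairBurau (↑q⁻¹ : A) p *ᵥ adjacentImage q t p) r =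
      (-(t * (q : A) ^ (p.val.1 + 1 : ℕ)) •
          pairTensor ((leftFactor q n).col p.val.2) (Pi.single p.val.1 1)
        - ((1 - q) * (q : A) ^ (p.val.1 : ℕ) * ↑q⁻¹) •
          pairTensor ((Set.Iio p.val.1).indicator 1) ((rightFactor q n).col p.val.2)) r := by
  have hq : (q : A) * ↑q⁻¹ = 1 := q.mul_inv
  have hlt : p.val.1 < p.val.2 := p.prop.2
  simp only [adjacentImage, mulVec_sub, mulVec_smul, Pi.sub_apply, Pi.smul_apply,
    pairBurau_mulVec_pairTensor _ hp _ _ hr,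
    mulVec_col_of_mul_mul_burau_eq q hlt.ne (burau_inv_mul_leftFactor_mul_burau q hp),
    mulVec_col_of_mul_mul_burau_eq q hlt.ne (burau_inv_mul_rightFactor_mul_burau q hp),
    burau_mulVec_single _ hlt.ne,
    burau_mulVec_indicator_Iio _ hlt]
  simp only [pairTensor, Pi.smul_apply, smul_eq_mul]
  grind

lemma LKgen_inv_mulVec_adjacentImage (t : Aˣ) :
    LKgen (↑t⁻¹ : A) (↑q⁻¹ : A) n p.val.1 *ᵥ adjacentImage q t p = (intertwiner q n).col p := by
  have ht : (t : A) * ↑t⁻¹ = 1 := t.mul_inv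
  have hq : (q : A) * ↑q⁻¹ = 1 := q.mul_inv
  ext r
  by_cases hr : r = p
  · rw [hr, LKgen_mulVec_apply_self _ hp, adjacentImage_apply_self, Matrix.col_apply,
      intertwiner_apply_self, hp]
    grind
  rw [LKgen_mulVec _ hp, Pi.add_apply, pairBurau_inv_mulVec_adjacentImage q hp _ hr,
    adjacentImage_apply_self]
  obtain ⟨⟨a, b⟩, ha, hab⟩ := p
  obtain ⟨⟨i, j⟩, hi, hij⟩ := r
  simp only [adjacentColumn, intertwiner, pairKronecker_apply, pairTensor, Matrix.col_apply,
    leftFactor, rightFactor, Pi.add_apply, Pi.sub_apply, Pi.smul_apply, smul_eq_mul,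
    Pi.single_apply, Set.indicator_apply, Set.mem_Iio, Set.mem_Ioi, Pi.one_apply,
    Subtype.mk.injEq, Prod.mk.injEq, Fin.lt_def, Fin.ext_iff] at *
  simp only [hp, two_mul, pow_add] at *
  grind

theorem LKgen_inv_mul_intertwiner_mul_LKgen (t : Aˣ) :
    LKgen (↑t⁻¹ : A) (↑q⁻¹ : A) n p.val.1 * intertwiner q n * LKgen (t : A) (q : A) n p.val.1 =
      intertwiner q n := by
  rw [Matrix.mul_assoc]
  refine Matrix.ext_col fun c => ?_
  change LKgen _ _ _ _ *ᵥ (intertwiner q n *ᵥ (LKgen (t : A) (q : A) n p.val.1).col c) = _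
  by_cases hc : c = p
  · rw [hc, LKgen_col_self _ hp, intertwiner_mulVec_adjacentColumn q hp,
      LKgen_inv_mulVec_adjacentImage q hp]
  · rw [LKgen_col_of_ne _ hp (t : A) hc,
      LKgen_inv_mulVec_intertwiner_mulVec_pairBurau_col q hp _ hc]

end Intertwiner

end LawrenceKrammer

open LawrenceKrammer in
theorem lk_inverse_reverse_conjugate_general {A : Type*} [CommRing A] (t q : Aˣ) (n : ℕ)
    (K : Braid n →* GL (BP n) A)
    (hK : ∀ m : Fin (n - 1),
      (K (σg m) : Matrix (BP n) (BP n) A) = LKgen (t : A) (q : A) n ((m : ℕ) + 1))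
    (conj : A →+* A) (hct : conj t = ↑t⁻¹) (hcq : conj q = ↑q⁻¹)
    (rev : Braid n →* (Braid n)ᵐᵒᵖ)
    (hrev : ∀ i : Fin (n - 1), rev (σg i) = MulOpposite.op (σg i)) :
    ∃ R : Matrix (BP n) (BP n) A,
      (∀ r c, R r c ∈ Subring.closure {(q : A), ↑q⁻¹}) ∧
      (∃ N : ℕ, R.det = (q : A) ^ N) ∧
      ∀ β : Braid n,
        (K β⁻¹ : Matrix (BP n) (BP n) A) =
          R⁻¹ * ((K (rev β).unop : Matrix (BP n) (BP n) A).map conj) * R := by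
  refine ⟨intertwiner q n, intertwiner_mem q (Subring.subset_closure (by simp))
    (Subring.subset_closure (by simp)), ⟨_, det_intertwiner q⟩, fun β => ?_⟩
  let R : GL (BP n) A := GeneralLinearGroup.mk'' (intertwiner q n)
    (det_intertwiner q ▸ q.isUnit.pow _)
  let Kbar : Braid n →* (GL (BP n) A)ᵐᵒᵖ :=
    ((GeneralLinearGroup.map conj).comp K).op.comp rev
  have intertwines (s) (hs : s ∈ Set.range σg) : (Kbar s).unop * R * K s = R := by
    obtain ⟨m, rfl⟩ := hs
    have hp : 0 < (m : ℕ) + 1 ∧ (m : ℕ) + 1 < m + 2 := by omega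
    have Kbar_σg : ((Kbar (σg m)).unop : Matrix (BP n) (BP n) A) =
        (K (σg m) : Matrix (BP n) (BP n) A).map conj := by
      simp only [Kbar, MonoidHom.comp_apply, hrev]
      rfl
    refine Units.ext ?_
    rw [Units.val_mul, Units.val_mul, Kbar_σg, hK, LKgen_map, hct, hcq]
    exact LKgen_inv_mul_intertwiner_mul_LKgen q
      (p := ⟨(⟨m + 1, by omega⟩, ⟨m + 2, by omega⟩), hp⟩) rfl t
  have K_inv := map_inv_eq_inv_mul_mul_of_closure_eq_top
    (PresentedGroup.closure_range_of _) K Kbar R intertwines β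
  rw [K_inv, Units.val_mul, Units.val_mul, coe_units_inv]
  rfl

/-- There is an invertible matrix `R` over `ℤ[t^{±1}, q^{±1}]` such that
for every braid `β`, `K(β⁻¹)(t,q) = R⁻¹ · K(β^rev)(t⁻¹, q⁻¹) · R`, where `β ↦ β^rev` is
the anti-automorphism fixing each Artin generator, and the substitution `t ↦ t⁻¹`,
`q ↦ q⁻¹` is implemented by the ring homomorphism `conj`. -/
theorem lk_inverse_reverse_conjugate (n : ℕ) (K : Braid n →* GL (BP n) F2)
    (hK : ∀ m : Fin (n - 1),
      (K (σg m) : Matrix (BP n) (BP n) F2) = LKgen tt qq n ((m : ℕ) + 1))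
    (conj : F2 →+* F2) (hct : conj tt = tt⁻¹) (hcq : conj qq = qq⁻¹)
    (rev : Braid n →* (Braid n)ᵐᵒᵖ)
    (hrev : ∀ i : Fin (n - 1), rev (σg i) = MulOpposite.op (σg i)) :
    ∃ R : Matrix (BP n) (BP n) F2,
      (∀ r c, R r c ∈ Subring.closure {tt, tt⁻¹, qq, qq⁻¹}) ∧
      R.det ≠ 0 ∧
      ∀ β : Braid n,
        (K β⁻¹ : Matrix (BP n) (BP n) F2) =
          R⁻¹ * ((K (rev β).unop : Matrix (BP n) (BP n) F2).map conj) * R := by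
  have ht : tt ≠ 0 := by simp [tt]
  have hq : qq ≠ 0 := by simp [qq]
  obtain ⟨R, R_mem, ⟨N, R_det⟩, hR⟩ := lk_inverse_reverse_conjugate_general
    (Units.mk0 tt ht) (Units.mk0 qq hq) n K hK conj (by simpa) (by simpa) rev hrev
  refine ⟨R, fun r c => Subring.closure_mono ?_ (R_mem r c), R_det ▸ pow_ne_zero N hq, hR⟩
  simp [Set.insert_subset_iff]
end
end
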